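/- There is no l₀-Luzin set: for every set L ⊆ ω^ω there exists a set A ∈ l₀ such that the cardinality of A ∩ L equals the cardinality of L. -/

import Mathlib

open Cardinal Set

/-- A tree on ω: a nonempty set of finite sequences closed under initial segments. -/
def IsTree (T : Set (List ℕ)) : Prop :=
  T.Nonempty ∧ ∀ s ∈ T, ∀ n : ℕ, s.take n ∈ T

/-- The body of a tree: all infinite branches. -/
def treeBody (T : Set (List ℕ)) : Set (ℕ → ℕ) :=
  {x | ∀ n : ℕ, (List.ofFn fun i : Fin n => x i) ∈ T}

/-- Immediate successors of a node in a tree. -/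
def succs (T : Set (List ℕ)) (t : List ℕ) : Set ℕ := {n | t ++ [n] ∈ T}

/-- Sacks (perfect) tree: every node has an extension with at least two immediate successors. -/
def IsSacksTree (T : Set (List ℕ)) : Prop :=
  IsTree T ∧ ∀ s ∈ T, ∃ t ∈ T, s <+: t ∧ (succs T t).Nontrivial

/-- Miller tree: every node has an extension with infinitely many immediate successors. -/
def IsMillerTree (T : Set (List ℕ)) : Prop :=
  IsTree T ∧ ∀ s ∈ T, ∃ t ∈ T, s <+: t ∧ (succs T t).Infinite

/-- Laver tree: has a stem (a node comparable with every node) such that every node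
extending the stem has infinitely many immediate successors. -/
def IsLaverTree (T : Set (List ℕ)) : Prop :=
  IsTree T ∧ ∃ s ∈ T, (∀ t ∈ T, s <+: t ∨ t <+: s) ∧
    ∀ t ∈ T, s <+: t → (succs T t).Infinite

/-- Complete Laver tree: every node has infinitely many immediate successors. -/
def IsCompleteLaverTree (T : Set (List ℕ)) : Prop :=
  IsTree T ∧ ∀ t ∈ T, (succs T t).Infinite

/-- The tree ideal t₀ associated with a family of trees 𝕋. -/
def treeIdeal (𝕋 : Set (Set (List ℕ))) : Set (Set (ℕ → ℕ)) :=
  {A | ∀ P ∈ 𝕋, ∃ Q ∈ 𝕋, Q ⊆ P ∧ treeBody Q ∩ A = ∅}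

/-- t-measurability with respect to a family of trees 𝕋. -/
def TMeasurable (𝕋 : Set (Set (List ℕ))) (A : Set (ℕ → ℕ)) : Prop :=
  ∀ P ∈ 𝕋, ∃ Q ∈ 𝕋, Q ⊆ P ∧ (treeBody Q ⊆ A ∨ treeBody Q ∩ A = ∅)

/-- 𝕋-Bernstein set: meets and omits the body of every tree in 𝕋. -/
def TBernstein (𝕋 : Set (Set (List ℕ))) (B : Set (ℕ → ℕ)) : Prop :=
  ∀ T ∈ 𝕋, (B ∩ treeBody T).Nonempty ∧ (B \ treeBody T).Nonempty


/-! ### Auxiliary material -/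

/-- Finite initial segment. -/
def pre (x : ℕ → ℕ) (n : ℕ) : List ℕ := List.ofFn fun i : Fin n => x i

lemma pre_length (x : ℕ → ℕ) (n : ℕ) : (pre x n).length = n := by simp [pre]

lemma pre_succ (x : ℕ → ℕ) (n : ℕ) : pre x (n+1) = pre x n ++ [x n] := by
  unfold pre
  rw [List.ofFn_succ_last]
  simp

lemma pre_eq_iff {x y : ℕ → ℕ} {n : ℕ} : pre x n = pre y n ↔ ∀ i < n, x i = y i := by
  unfold pre
  rw [List.ofFn_inj, funext_iff]
  exact ⟨fun h i hi => h ⟨i, hi⟩, fun h i => h i i.2⟩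

lemma mem_treeBody {T : Set (List ℕ)} {x : ℕ → ℕ} : x ∈ treeBody T ↔ ∀ n, pre x n ∈ T := Iff.rfl

lemma treeBody_mono {S T : Set (List ℕ)} (h : S ⊆ T) : treeBody S ⊆ treeBody T :=
  fun _ hx n => h (hx n)

/-- Successor sets, replaced by everything when finite. -/
noncomputable def SS (P : Set (List ℕ)) (t : List ℕ) : Set ℕ :=
  open Classical in if (succs P t).Infinite then succs P t else univ

lemma SS_inf (P : Set (List ℕ)) (t : List ℕ) : (SS P t).Infinite := by
  unfold SS; split_ifs with h
  · exact h
  · exact infinite_univ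

lemma SS_eq {P : Set (List ℕ)} {t : List ℕ} (h : (succs P t).Infinite) : SS P t = succs P t := by
  simp [SS, h]

/-- Stem predicate. -/
def IsStem (P : Set (List ℕ)) (s : List ℕ) : Prop :=
  s ∈ P ∧ (∀ t ∈ P, s <+: t ∨ t <+: s) ∧ ∀ t ∈ P, s <+: t → (succs P t).Infinite

/-- Pruned tree. -/
def prune (P : Set (List ℕ)) (s : List ℕ) (S : List ℕ → Set ℕ) : Set (List ℕ) :=
  {t | t ∈ P ∧ ∀ u i, s <+: u → u ++ [i] <+: t → i ∈ S u}

lemma prune_sub (P : Set (List ℕ)) (s : List ℕ) (S : List ℕ → Set ℕ) : prune P s S ⊆ P :=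
  fun _ h => h.1

lemma prune_laver {P : Set (List ℕ)} {s : List ℕ} {S : List ℕ → Set ℕ} (hT : IsTree P)
    (hs : IsStem P s) (hS : ∀ t, (S t).Infinite) (hS' : ∀ t, S t ⊆ SS P t) :
    IsLaverTree (prune P s S) := by
  obtain ⟨h1, h2, h3⟩ := hs
  have hmem : s ∈ prune P s S := by
    refine ⟨h1, fun u i hu hi => ?_⟩
    have a := hu.length_le
    have b := hi.length_le
    simp at b; omega
  refine ⟨⟨⟨s, hmem⟩, fun t ht n => ⟨hT.2 t ht.1 n, fun u i hu hi => ?_⟩⟩, s, hmem,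
    fun t ht => h2 t ht.1, fun t ht hst => ?_⟩
  · exact ht.2 u i hu (hi.trans (List.take_prefix n t))
  · refine (hS t).mono fun i hi => ?_
    have hi' : i ∈ succs P t := by
      have := hS' t hi
      rwa [SS_eq (h3 t ht.1 hst)] at this
    refine ⟨hi', fun u j hu huj => ?_⟩
    rcases (List.prefix_concat_iff).1 huj with h | h
    · have := List.append_inj' h rfl
      obtain ⟨rfl, hh⟩ := this
      simp at hh; subst hh; exact hi
    · exact ht.2 u j hu h

lemma prune_body {P : Set (List ℕ)} {s : List ℕ} {S : List ℕ → Set ℕ} 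
    (hs : IsStem P s) {y : ℕ → ℕ} (hy : y ∈ treeBody (prune P s S)) {n : ℕ} (hn : s.length ≤ n) :
    y n ∈ S (pre y n) := by
  have h := mem_treeBody.1 hy
  refine (h (n+1)).2 (pre y n) (y n) ?_ (by rw [pre_succ])
  rcases hs.2.1 _ (h n).1 with h' | h'
  · exact h'
  · have : pre y n = s := h'.eq_of_length_le (by rw [pre_length]; exact hn)
    rw [this]

/-- Fibres. -/
def Fib (k : List ℕ → ℕ → ℕ) (r : List ℕ → ℕ → ℕ → Bool) (n0 : ℕ) (z : ℕ → Bool) :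
    Set (ℕ → ℕ) :=
  {y | ∀ n ≥ n0, ∀ j < k (pre y n) (y n), r (pre y n) (y n) j = z j}

lemma exists_labels : ∃ (K : ℕ → ℕ) (R : ℕ → ℕ → Bool), (∀ N, {m | K m < N}.Finite) ∧
    ∀ z : ℕ → Bool, {m | ∀ j < K m, R m j = z j}.Infinite := by
  have : Denumerable (List Bool) := Denumerable.ofEncodableOfInfinite _
  let e : List Bool ≃ ℕ := Denumerable.eqv _
  refine ⟨fun m => (e.symm m).length, fun m j => (e.symm m).getD j false, fun N => ?_, fun z => ?_⟩
  · exact (List.finite_length_lt Bool N).preimage (f := e.symm) e.symm.injective.injOn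
  · refine infinite_of_injective_forall_mem (f := fun n : ℕ => e (List.ofFn fun i : Fin n => z i)) ?_ ?_
    · intro a b h
      have := congrArg List.length (e.injective h)
      simpa using this
    · intro n j hj
      simp at hj
      simp [hj]

open Classical in
lemma lemB {P : Set (List ℕ)} (hP : IsLaverTree P) :
    ∃ (k : List ℕ → ℕ → ℕ) (r : List ℕ → ℕ → ℕ → Bool) (n0 : ℕ)
      (T : (ℕ → Bool) → Set (List ℕ)), (∀ t N, {i | k t i < N}.Finite) ∧
      (∀ z, IsLaverTree (T z) ∧ T z ⊆ P ∧ treeBody (T z) ⊆ Fib k r n0 z) ∧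
      ∀ z z' y, y ∈ treeBody (T z) → y ∈ treeBody (T z') → z = z' := by
  obtain ⟨hT, s, hs⟩ := hP
  have hs : IsStem P s := hs
  obtain ⟨K, R, hK, hR⟩ := exists_labels
  let c : List ℕ → ℕ → ℕ := fun t i => Nat.count (· ∈ SS P t) i
  let k : List ℕ → ℕ → ℕ := fun t i => K (c t i)
  let r : List ℕ → ℕ → ℕ → Bool := fun t i => R (c t i)
  let S : (ℕ → Bool) → List ℕ → Set ℕ := fun z t =>
    {i | i ∈ SS P t ∧ t.length ≤ k t i ∧ ∀ j < k t i, r t i j = z j}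
  have hcn : ∀ t m, c t (Nat.nth (· ∈ SS P t) m) = m := fun t m =>
    Nat.count_nth_of_infinite (p := (· ∈ SS P t)) (SS_inf P t) m
  have hk : ∀ t N, {i | k t i < N}.Finite := by
    intro t N
    obtain ⟨B, hB⟩ := (hK N).bddAbove
    refine (Set.finite_Iic (Nat.nth (· ∈ SS P t) (B+1))).subset fun i hi => ?_
    have h1 : c t i ≤ B := hB hi
    by_contra hlt
    simp only [Set.mem_Iic, not_le] at hlt
    have : c t (Nat.nth (· ∈ SS P t) (B+1)) ≤ c t i := Nat.count_monotone _ hlt.le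
    rw [hcn] at this; omega
  have hS : ∀ z t, (S z t).Infinite := by
    intro z t
    have h1 : ({m | ∀ j < K m, R m j = z j} \ {m | K m < t.length}).Infinite := (hR z).sdiff (hK _)
    refine Set.Infinite.mono (s := (Nat.nth (· ∈ SS P t)) '' _) ?_
      (h1.image (Nat.nth_injective (SS_inf P t)).injOn)
    rintro _ ⟨m, ⟨hm1, hm2⟩, rfl⟩
    refine ⟨Nat.nth_mem_of_infinite (SS_inf P t) m, ?_, ?_⟩
    · show t.length ≤ K (c t _)
      rw [hcn]; simpa using hm2
    · show ∀ j < K (c t _), R (c t _) j = z j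
      rw [hcn]; exact hm1
  refine ⟨k, r, s.length, fun z => prune P s (S z), hk, fun z => ⟨prune_laver hT hs (hS z)
    fun t i hi => hi.1, prune_sub _ _ _, fun y hy n hn => (prune_body hs hy hn).2.2⟩, ?_⟩
  intro z z' y h h'
  funext j
  have hn : s.length ≤ max s.length (j+1) := le_max_left _ _
  have a := prune_body hs h hn
  have b := prune_body hs h' hn
  have hj : j < k (pre y (max s.length (j+1))) (y (max s.length (j+1))) := by
    have := a.2.1
    rw [pre_length] at this
    omega
  rw [← a.2.2 j hj, ← b.2.2 j hj]

lemma lemD {X : Set (ℕ → ℕ)} (hX : #X < 𝔠) : X ∈ treeIdeal {T | IsLaverTree T} := by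
  intro P hP
  obtain ⟨k, r, n0, T, -, h, hd⟩ := lemB hP
  by_contra hcon
  push Not at hcon
  have : ∀ z, ∃ y, y ∈ treeBody (T z) ∧ y ∈ X := fun z =>
    (hcon (T z) (h z).1 (h z).2.1)
  choose f hf1 hf2 using this
  have hinj : Function.Injective (fun z => (⟨f z, hf2 z⟩ : X)) := by
    intro z z' hzz
    have : f z = f z' := congrArg Subtype.val hzz
    exact hd z z' (f z) (hf1 z) (this ▸ hf1 z')
  have := Cardinal.mk_le_of_injective hinj
  simp at this
  exact absurd this (not_le.2 hX)

lemma owner {E : List ℕ → Set ℕ} (hE : ∀ t, (E t).Infinite) :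
    ∃ c : ℕ → List ℕ, ∀ t, {N | N ∈ E t ∧ c N = t}.Infinite := by
  let e : List ℕ × ℕ ≃ ℕ := Denumerable.eqv _
  have hex : ∀ t n, ∃ m ∈ E t, n < m := fun t n => (hE t).exists_gt n
  choose g hg1 hg2 using hex
  let p : ℕ → List ℕ := fun n => (e.symm n).1
  let x : ℕ → ℕ := fun n => Nat.rec (g (p 0) 0) (fun n prev => g (p (n+1)) prev) n
  have hx : ∀ n, x n ∈ E (p n) := by
    intro n
    cases n with
    | zero => exact hg1 _ _
    | succ n => exact hg1 _ _
  have hmono : StrictMono x := strictMono_nat_of_lt_succ fun n => hg2 _ _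
  refine ⟨fun N => p (Function.invFun x N), fun t => ?_⟩
  refine infinite_of_injective_forall_mem (f := fun n : ℕ => x (e (t, n))) ?_ ?_
  · intro a b h
    have := e.injective (hmono.injective h)
    simpa using this
  · intro n
    have hp : p (e (t, n)) = t := by simp [p]
    refine ⟨?_, ?_⟩
    · have := hx (e (t, n)); rwa [hp] at this
    · show p (Function.invFun x _) = t
      rw [Function.leftInverse_invFun hmono.injective]; exact hp

lemma exists_lim {S : Set ℕ} (hS : S.Infinite) (r : ℕ → ℕ → Bool) :
    ∃ (z : ℕ → Bool) (S' : Set ℕ), S' ⊆ S ∧ S'.Infinite ∧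
      ∀ N, {i | i ∈ S' ∧ ¬ ∀ j < N, r i j = z j}.Finite := by
  obtain ⟨z, φ, hφ, hz⟩ := CompactSpace.tendsto_subseq fun n => r (Nat.nth (· ∈ S) n)
  have hinj : Function.Injective fun n => Nat.nth (· ∈ S) (φ n) :=
    (Nat.nth_injective hS).comp hφ.injective
  refine ⟨z, range fun n => Nat.nth (· ∈ S) (φ n), ?_, infinite_range_of_injective hinj, ?_⟩
  · rintro _ ⟨n, rfl⟩; exact Nat.nth_mem_of_infinite hS _
  · intro N
    have h1 : ∀ᶠ n in Filter.atTop, ∀ j < N, r (Nat.nth (· ∈ S) (φ n)) j = z j := by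
      have : ∀ j, ∀ᶠ n in Filter.atTop, r (Nat.nth (· ∈ S) (φ n)) j = z j := by
        intro j
        have := (tendsto_pi_nhds.1 hz) j
        rw [nhds_discrete] at this
        simpa using this
      exact (Filter.eventually_all_finite (Set.finite_lt_nat N)).2 fun j _ => this j
    obtain ⟨B, hB⟩ := Filter.eventually_atTop.1 h1
    refine ((Set.finite_lt_nat B).image fun n => Nat.nth (· ∈ S) (φ n)).subset ?_
    rintro _ ⟨⟨n, rfl⟩, hn⟩
    refine ⟨n, ?_, rfl⟩
    by_contra hlt
    exact hn (hB n (by simpa using hlt))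

lemma types {S : Set ℕ} (hS : S.Infinite) (p : ℕ → Prop) (d : ℕ → ℕ) :
    ∃ (S2 : Set ℕ) (N : ℕ), S2 ⊆ S ∧ S2.Infinite ∧ ((∀ i ∈ S2, p i) ∨
      (∀ i ∈ S2, ¬ p i ∧ d i = N) ∨ (Set.InjOn d S2)) := by
  by_cases h1 : {i | i ∈ S ∧ p i}.Infinite
  · exact ⟨_, 0, fun i hi => hi.1, h1, Or.inl fun i hi => hi.2⟩
  have h2 : (S \ {i | i ∈ S ∧ p i}).Infinite := hS.sdiff (Set.not_infinite.1 h1)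
  by_cases h3 : (d '' (S \ {i | i ∈ S ∧ p i})).Infinite
  · obtain ⟨S2, hS2, hb⟩ := Set.exists_subset_bijOn (S \ {i | i ∈ S ∧ p i}) d
    refine ⟨S2, 0, hS2.trans fun i hi => hi.1, ?_, Or.inr (Or.inr hb.injOn)⟩
    refine Set.Infinite.of_image d ?_
    rwa [hb.image_eq]
  · have : ∃ N, ((S \ {i | i ∈ S ∧ p i}) ∩ d ⁻¹' {N}).Infinite := by
      by_contra hc
      push Not at hc
      exact h2 (Set.Finite.of_finite_fibers d (Set.not_infinite.1 h3) fun x _ => hc x)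
    obtain ⟨N, hN⟩ := this
    exact ⟨_, N, fun i hi => hi.1.1, hN, Or.inr (Or.inl fun i hi =>
      ⟨fun hp => hi.1.2 ⟨hi.1.1, hp⟩, hi.2⟩)⟩

lemma firstDiff_eq' {x a b : ℕ → Bool} (hab : a ≠ b) (hxb : x ≠ b)
    (h : ∀ j < PiNat.firstDiff a b + 1, x j = a j) :
    PiNat.firstDiff x b = PiNat.firstDiff a b := by
  rcases lt_trichotomy (PiNat.firstDiff x b) (PiNat.firstDiff a b) with hl | hl | hl
  · exact absurd ((h _ (by omega)).trans (PiNat.apply_eq_of_lt_firstDiff hl))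
      (PiNat.apply_firstDiff_ne hxb)
  · exact hl
  · exact absurd ((h _ (by omega)).symm.trans (PiNat.apply_eq_of_lt_firstDiff hl))
      (PiNat.apply_firstDiff_ne hab)

open Classical in
lemma lemC (k : List ℕ → ℕ → ℕ) (r : List ℕ → ℕ → ℕ → Bool) (n0 : ℕ)
    (hk : ∀ t N, {i | k t i < N}.Finite) {P : Set (List ℕ)} (hP : IsLaverTree P) :
    ∃ (Q : Set (List ℕ)) (C : Set (ℕ → Bool)), IsLaverTree Q ∧ Q ⊆ P ∧ C.Countable ∧
      ∀ x, x ∉ C → (treeBody Q ∩ Fib k r n0 x).Countable := by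
  obtain ⟨hT, s, hs⟩ := hP
  have hs : IsStem P s := hs
  choose z S1 hS1 hS1i hz using fun t => exists_lim (SS_inf P t) (r t)
  let D : List ℕ → ℕ := fun v => PiNat.firstDiff (z v) (z v.dropLast)
  have hD : ∀ t i, D (t ++ [i]) = PiNat.firstDiff (z (t ++ [i])) (z t) := by
    intro t i; simp [D]
  choose S2 Nn hS2 hS2i hty using fun t =>
    types (hS1i t) (fun i => z (t ++ [i]) = z t) (fun i => D (t ++ [i]))
  let d : List ℕ → ℕ → ℕ := fun t i => D (t ++ [i])
  let E : List ℕ → Set ℕ := fun t => if (d t '' S2 t).Infinite then d t '' S2 t else univ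
  have hE : ∀ t, (E t).Infinite := by
    intro t; simp only [E]; split_ifs with h
    · exact h
    · exact infinite_univ
  obtain ⟨c, hc⟩ := owner hE
  let S3 : List ℕ → Set ℕ := fun t => {i | i ∈ S2 t ∧ ((d t '' S2 t).Infinite → c (d t i) = t)}
  have hS3i : ∀ t, (S3 t).Infinite := by
    intro t
    by_cases h : (d t '' S2 t).Infinite
    · refine Set.Infinite.of_image (d t) ((hc t).mono ?_)
      rintro N ⟨hN, hcN⟩
      simp only [E, if_pos h] at hN
      obtain ⟨i, hi, rfl⟩ := hN
      exact ⟨i, ⟨hi, fun _ => hcN⟩, rfl⟩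
    · exact (hS2i t).mono fun i hi => ⟨hi, fun h' => absurd h' h⟩
  let M : List ℕ → ℕ := fun t => max t.length (max (D t + 1) (Nn t + 1))
  let S4 : List ℕ → Set ℕ := fun t => (S3 t \ {i | k t i < M t}) \
    {i | i ∈ S1 t ∧ ¬ ∀ j < M t, r t i j = z t j}
  have hS4i : ∀ t, (S4 t).Infinite := fun t => ((hS3i t).sdiff (hk t _)).sdiff (hz t _)
  have hS43 : ∀ t, S4 t ⊆ S3 t := fun t i hi => hi.1.1
  have hS41 : ∀ t, S4 t ⊆ S1 t := fun t i hi => hS2 t (hS43 t hi).1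
  have hS4 : ∀ t i, i ∈ S4 t → M t ≤ k t i ∧ ∀ j < M t, r t i j = z t j := by
    intro t i hi
    refine ⟨not_lt.1 hi.1.2, ?_⟩
    by_contra hcon
    exact hi.2 ⟨hS41 t hi, hcon⟩
  refine ⟨prune P s S4, range z, prune_laver hT hs hS4i fun t => (hS41 t).trans (hS1 t),
    prune_sub _ _ _, countable_range z, fun x hx => ?_⟩
  have hxz : ∀ t, x ≠ z t := fun t h => hx ⟨t, h.symm⟩
  let n1 := max s.length n0
  have key : ∀ y ∈ treeBody (prune P s S4) ∩ Fib k r n0 x, ∀ n ≥ n1,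
      y n ∈ S4 (pre y n) ∧ ∀ j < M (pre y n), x j = z (pre y n) j := by
    intro y hy n hn
    have h1 : y n ∈ S4 (pre y n) := prune_body hs hy.1 (le_trans (le_max_left _ _) hn)
    refine ⟨h1, fun j hj => ?_⟩
    have h2 := hS4 _ _ h1
    rw [← h2.2 j hj, hy.2 n (le_trans (le_max_right _ _) hn) j (lt_of_lt_of_le hj h2.1)]
  have claim : ∀ y ∈ treeBody (prune P s S4) ∩ Fib k r n0 x, ∀ m ≥ n1, ∃ n ≥ m,
      d (pre y n) (y n) = PiNat.firstDiff x (z (pre y m)) ∧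
      c (PiNat.firstDiff x (z (pre y m))) = pre y n ∧ y n ∈ S2 (pre y n) ∧
      Set.InjOn (d (pre y n)) (S2 (pre y n)) := by
    intro y hy m hm
    have hex : ∃ n, m ≤ n ∧ z (pre y (n+1)) ≠ z (pre y m) := by
      by_contra hcon
      push Not at hcon
      refine hxz (pre y m) (funext fun j => ?_)
      have h1 := (key y hy (m + j + 1) (by omega)).2 j (by
        simp only [M, pre_length]; omega)
      rw [h1, hcon (m+j) (by omega)]
    classical
    let n := Nat.find hex
    obtain ⟨hmn, hne⟩ : m ≤ n ∧ z (pre y (n+1)) ≠ z (pre y m) := Nat.find_spec hex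
    have heq : z (pre y n) = z (pre y m) := by
      rcases hmn.eq_or_lt with h | h
      · rw [← h]
      · have := Nat.find_min hex (m := n - 1) (by omega)
        push Not at this
        have := this (by omega)
        rwa [Nat.sub_add_cancel (by omega)] at this
    have hn1 := key y hy n (by omega)
    have hn2 := key y hy (n+1) (by omega)
    have hmem := hS43 _ hn1.1
    rw [← heq] at hne ⊢
    have hfd : PiNat.firstDiff x (z (pre y n)) = d (pre y n) (y n) := by
      simp only [d]
      rw [pre_succ] at hne hn2
      rw [hD]
      refine firstDiff_eq' hne (hxz _) fun j hj => hn2.2 j ?_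
      rw [← hD] at hj
      simp only [M]; omega
    refine ⟨n, hmn, hfd.symm, ?_⟩
    rcases hty (pre y n) with h | h | h
    · exact absurd (h _ hmem.1) (by rw [← pre_succ]; exact hne)
    · exfalso
      have h1 := (h _ hmem.1).2
      refine PiNat.apply_firstDiff_ne (hxz (pre y n)) (hn1.2 _ ?_)
      rw [hfd]
      simp only [d, M, h1]; omega
    · have hinf : (d (pre y n) '' S2 (pre y n)).Infinite := (hS2i _).image h
      exact ⟨by rw [hfd]; exact hmem.2 hinf, hmem.1, h⟩
  refine Set.MapsTo.countable_of_injOn (f := fun y => pre y n1) (t := univ)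
    (fun _ _ => mem_univ _) ?_ (Set.to_countable _)
  intro y hy y' hy' hyy
  by_contra hne
  simp only at hyy
  have hex : ∃ m, y m ≠ y' m := by
    by_contra hcon; push Not at hcon; exact hne (funext hcon)
  classical
  let m := Nat.find hex
  have hm : y m ≠ y' m := Nat.find_spec hex
  have hmin : ∀ i < m, y i = y' i := fun i hi => by
    have := Nat.find_min hex hi; push Not at this; exact this
  have hmn1 : n1 ≤ m := by
    by_contra hlt
    exact hm (pre_eq_iff.1 hyy m (by omega))
  have hpre : pre y m = pre y' m := pre_eq_iff.2 hmin
  obtain ⟨n, hn, h1, h2, h3, h4⟩ := claim y hy m hmn1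
  obtain ⟨n', hn', h1', h2', h3', h4'⟩ := claim y' hy' m hmn1
  rw [← hpre] at h1' h2'
  have hp : pre y n = pre y' n' := h2.symm.trans h2'
  have hnn : n = n' := by
    have := congrArg List.length hp
    simpa [pre_length] using this
  subst hnn
  rcases hn.eq_or_lt with h | h
  · subst h
    rw [← hp] at h1' h3'
    exact hm (h4 h3 h3' (h1.trans h1'.symm))
  · exact hm (pre_eq_iff.1 hp m h)

lemma union_small {ι α : Type} {s : Set ι} {f : ι → Set α} (hs : #s < 𝔠)
    (hf : ∀ i, (f i).Countable) : #(⋃ i ∈ s, f i) < 𝔠 := by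
  refine (Cardinal.mk_biUnion_le f s).trans_lt ?_
  refine Cardinal.mul_lt_of_lt Cardinal.aleph0_le_continuum hs ?_
  refine lt_of_le_of_lt (ciSup_le' fun i => ?_) Cardinal.aleph0_lt_continuum
  exact Cardinal.le_aleph0_iff_set_countable.2 (hf i)

lemma exists_notMem {α : Type} {X Y : Set α} (hX : 𝔠 ≤ #X) (hY : #Y < 𝔠) : ∃ a ∈ X, a ∉ Y := by
  by_contra h
  push Not at h
  exact absurd (hX.trans (Cardinal.mk_le_mk_of_subset h)) (not_le.2 hY)

lemma choice {ι α : Type} (hι : #ι = 𝔠) (L : Set α) (G : ι → Set α)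
    (H : ∀ (s : Set ι) (Y : Set α), #s < 𝔠 → #Y < 𝔠 → ∃ a ∈ L, a ∉ Y ∧ ∀ i ∈ s, a ∉ G i) :
    ∃ A ⊆ L, #A = 𝔠 ∧ ∀ i, #(A ∩ G i : Set α) < 𝔠 := by
  obtain ⟨_, _, hord⟩ := Cardinal.exists_ord_eq_type_lt ι
  have hIio : ∀ i : ι, #(Iio i) < 𝔠 := fun i => hι ▸ Cardinal.mk_Iio_lt i hord
  have hIic : ∀ i : ι, #(Iic i) < 𝔠 := fun i => by
    rw [← hι]
    exact Cardinal.mk_Iic_lt i hord (hι ▸ Cardinal.aleph0_le_continuum)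
  have step : ∀ (i : ι) (f : (j : ι) → j < i → α), ∃ a ∈ L, (∀ j hj, a ≠ f j hj) ∧
      ∀ j ≤ i, a ∉ G j := by
    intro i f
    obtain ⟨a, h1, h2, h3⟩ := H (Iic i) (range fun j : Iio i => f j j.2) (hIic i)
      (Cardinal.mk_range_le.trans_lt (hIio i))
    exact ⟨a, h1, fun j hj h => h2 ⟨⟨j, hj⟩, h.symm⟩, h3⟩
  choose F hF1 hF2 hF3 using step
  let a : ι → α := (wellFounded_lt (α := ι)).fix F
  have ha : ∀ i, a i = F i (fun j _ => a j) := fun i => WellFounded.fix_eq _ _ _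
  have hlt : ∀ i j, j < i → a i ≠ a j := fun i j hj => by
    rw [ha i]; exact hF2 i (fun j _ => a j) j hj
  have hinj : Function.Injective a := by
    intro i j h
    rcases lt_trichotomy i j with h' | h' | h'
    · exact absurd h.symm (hlt _ _ h')
    · exact h'
    · exact absurd h (hlt _ _ h')
  refine ⟨range a, ?_, ?_, fun i => ?_⟩
  · rintro _ ⟨i, rfl⟩; rw [ha]; exact hF1 _ _
  · rw [Cardinal.mk_range_eq a hinj, hι]
  · refine (Cardinal.mk_le_mk_of_subset (t := a '' Iio i) ?_).trans_lt
      (Cardinal.mk_image_le.trans_lt (hIio i))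
    rintro _ ⟨⟨j, rfl⟩, hj⟩
    refine ⟨j, ?_, rfl⟩
    by_contra hji
    refine hF3 j (fun j _ => a j) i (not_lt.1 hji) ?_
    rw [← ha]; exact hj

/-- there is no l₀-Luzin set. -/
theorem stmt10 :
    ∀ L : Set (ℕ → ℕ), ∃ A ∈ treeIdeal {T | IsLaverTree T},
      Cardinal.mk ↑(A ∩ L) = Cardinal.mk ↑L := by
  intro L
  classical
  by_cases hL : L ∈ treeIdeal {T | IsLaverTree T}
  · exact ⟨L, hL, by rw [Set.inter_self]⟩
  have hLc : #L = 𝔠 := by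
    refine le_antisymm ((Cardinal.mk_set_le L).trans (by simp)) ?_
    by_contra h
    exact hL (lemD (not_le.1 h))
  have hP0 : ∃ P, IsLaverTree P ∧ ∀ Q, IsLaverTree Q → Q ⊆ P → (treeBody Q ∩ L).Nonempty := by
    by_contra hcon
    push Not at hcon
    exact hL fun P hP => by
      obtain ⟨Q, h1, h2, h3⟩ := hcon P hP
      exact ⟨Q, h1, h2, h3⟩
  obtain ⟨P0, hP0, hbig⟩ := hP0
  have hbig' : ∀ Q, IsLaverTree Q → Q ⊆ P0 → 𝔠 ≤ #(treeBody Q ∩ L : Set (ℕ → ℕ)) := by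
    intro Q hQ hQP
    by_contra h
    obtain ⟨Q', h1, h2, h3⟩ := lemD (not_le.1 h) Q hQ
    obtain ⟨y, hy, hyL⟩ := hbig Q' h1 (h2.trans hQP)
    have : y ∈ treeBody Q' ∩ (treeBody Q ∩ L) := ⟨hy, treeBody_mono h2 hy, hyL⟩
    rw [h3] at this
    exact this
  obtain ⟨k, r, n0, T, hk, hT, -⟩ := lemB hP0
  have hQC : ∀ P : Set (List ℕ), ∃ (Q : Set (List ℕ)) (C : Set (ℕ → Bool)),
      (IsLaverTree P → IsLaverTree Q ∧ Q ⊆ P) ∧ C.Countable ∧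
      ∀ x, x ∉ C → (treeBody Q ∩ Fib k r n0 x).Countable := by
    intro P
    by_cases hP : IsLaverTree P
    · obtain ⟨Q, C, h1, h2, h3, h4⟩ := lemC k r n0 hk hP
      exact ⟨Q, C, fun _ => ⟨h1, h2⟩, h3, h4⟩
    · refine ⟨∅, ∅, fun h => absurd h hP, Set.countable_empty, fun x _ => ?_⟩
      have : treeBody (∅ : Set (List ℕ)) = ∅ := by
        ext y; simp [treeBody]
      simp [this]
  choose Q C hQ hC hQF using hQC
  obtain ⟨A, hAL, hAc, hA⟩ := choice (ι := Set (List ℕ)) (by simp) L (fun P => treeBody (Q P)) (by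
    intro s Y hs hY
    obtain ⟨z, -, hz⟩ := exists_notMem (X := (univ : Set (ℕ → Bool))) (by simp)
      (union_small hs hC)
    simp only [mem_iUnion, not_exists] at hz
    have hU : #(⋃ i ∈ s, if z ∈ C i then ∅ else treeBody (Q i) ∩ Fib k r n0 z :
        Set (ℕ → ℕ)) < 𝔠 := by
      refine union_small hs fun i => ?_
      split_ifs with h
      · exact Set.countable_empty
      · exact hQF i z h
    obtain ⟨a, ⟨haT, haL⟩, ha⟩ := exists_notMem (hbig' (T z) (hT z).1 (hT z).2.1)
      ((Cardinal.mk_union_le _ _).trans_lt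
        (Cardinal.add_lt_of_lt Cardinal.aleph0_le_continuum hY hU))
    refine ⟨a, haL, fun h => ha (Or.inl h), fun i hi h => ha (Or.inr ?_)⟩
    simp only [mem_iUnion]
    refine ⟨i, hi, ?_⟩
    rw [if_neg (hz i hi)]
    exact ⟨h, (hT z).2.2 haT⟩)
  refine ⟨A, fun P hP => ?_, ?_⟩
  · obtain ⟨Q', h1, h2, h3⟩ := lemD (hA P) (Q P) (hQ P hP).1
    refine ⟨Q', h1, h2.trans (hQ P hP).2, Set.eq_empty_iff_forall_notMem.2 ?_⟩
    rintro y ⟨hy, hyA⟩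
    have : y ∈ treeBody Q' ∩ (A ∩ treeBody (Q P)) := ⟨hy, hyA, treeBody_mono h2 hy⟩
    rw [h3] at this
    exact this
  · rw [Set.inter_eq_left.2 hAL, hAc, hLc]
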